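/- Let μ be an ergodic process on Σ = 𝒜^{ℤ_{≥0}^d} with entropy rate h(μ) = h and let δ ∈ (0, 1/2). Then there is k_0 = k_0(δ) such that for every k ≥ k_0 there exists a set 𝒯_k ⊆ Σ^k with log|𝒯_k| / k^d ≤ h + δ, such that for μ-almost every x there is n_0 = n_0(x,k,δ) with 𝜇̃_x^{k,n}(𝒯_k) > 1 − δ for all n ≥ n_0. -/

import Mathlib

open MeasureTheory Filter Topology

namespace SRU1408

/-- A site of the lattice `ℤ_{≥0}^d`. -/
abbrev Site (d : ℕ) := Fin d → ℕ

/-- An infinite array over the alphabet `Fin A`, i.e. an element of `Σ = 𝒜^{ℤ_{≥0}^d}`. -/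
abbrev Config (A d : ℕ) := Site d → Fin A

/-- A cubical `k`-word, i.e. an element of `Σ^k = 𝒜^{Λ_k}`. -/
abbrev Word (A d k : ℕ) := (Fin d → Fin k) → Fin A

variable {A d : ℕ}

/-- The pattern of `x` on the cube `Λ_k + c`, as a `k`-word. -/
def wordAt (x : Config A d) (k : ℕ) (c : Site d) : Word A d k :=
  fun i => x fun j => c j + (i j : ℕ)

/-- The lattice shift `σ_r`. -/
def shift (r : Site d) (x : Config A d) : Config A d := fun i => x (i + r)

/-- Stationarity: invariance under all shifts. -/
def Stationary (μ : Measure (Config A d)) : Prop := ∀ r : Site d, μ.map (shift r) = μ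

/-- Ergodicity: stationary, and every measurable set invariant under all shifts is trivial. -/
def ErgodicShift (μ : Measure (Config A d)) : Prop :=
  Stationary μ ∧ ∀ E : Set (Config A d), MeasurableSet E →
    (∀ r : Site d, shift r ⁻¹' E = E) → μ E = 0 ∨ μ E = 1

/-- The `k`-word marginal distribution `μ^k`, as a probability vector on `Σ^k`. -/
noncomputable def wordDist (μ : Measure (Config A d)) (k : ℕ) : Word A d k → ℝ :=
  fun w => (μ {x | wordAt x k 0 = w}).toReal

/-- Base-`A` entropy of a probability vector. -/
noncomputable def entH (A : ℕ) {W : Type*} [Fintype W] (p : W → ℝ) : ℝ :=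
  -∑ w, p w * Real.logb A (p w)

/-- `μ` has entropy rate `h` (base-`A` logarithms): `H(μ^n)/n^d → h`. -/
def HasEntropyRate (μ : Measure (Config A d)) (h : ℝ) : Prop :=
  Tendsto (fun n : ℕ => entH A (wordDist μ n) / (n : ℝ) ^ d) atTop (𝓝 h)

/-- The empirical non-overlapping `k`-block distribution `𝜇̃_x^{k,n}` of `x` over `Λ_n`. -/
noncomputable def empDist (x : Config A d) (k n : ℕ) : Word A d k → ℝ := fun w =>
  (Set.ncard {r : Fin d → Fin (n / k) | wordAt x k (fun j => k * (r j : ℕ)) = w} : ℝ) /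
    ((n / k : ℕ) : ℝ) ^ d

/-- The empirical probability `𝜇̃_x^{k,n}(S)` of a set `S` of `k`-words. -/
noncomputable def empProb (x : Config A d) (k n : ℕ) (S : Set (Word A d k)) : ℝ :=
  (Set.ncard {r : Fin d → Fin (n / k) | wordAt x k (fun j => k * (r j : ℕ)) ∈ S} : ℝ) /
    ((n / k : ℕ) : ℝ) ^ d

/-- `k(n) = ⌊(log_A n^d)^{1/d}⌋`. -/
noncomputable def kOf (A d n : ℕ) : ℕ :=
  ⌊(Real.logb A ((n : ℝ) ^ d)) ^ (1 / (d : ℝ))⌋₊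

/-- The cube `Λ_n` as a finite set of sites. -/
def box (d n : ℕ) : Finset (Site d) := Fintype.piFinset fun _ => Finset.range n

lemma mem_box {n : ℕ} {c : Site d} : c ∈ box d n ↔ ∀ j, c j < n := by
  simp [box]

lemma card_box (n : ℕ) : (box d n).card = n ^ d := by
  simp [box]

lemma box_mono {m n : ℕ} (hmn : m ≤ n) : box d m ⊆ box d n := fun _ hc =>
  mem_box.2 fun j => (mem_box.1 hc j).trans_le hmn

lemma sum_fin_eq_sum_box {M : Type*} [AddCommMonoid M] (n : ℕ) (φ : Site d → M) :
    ∑ i : Fin d → Fin n, φ (fun j => (i j : ℕ)) = ∑ c ∈ box d n, φ c := by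
  refine Finset.sum_bij' (fun i _ j => (i j : ℕ)) (fun _ hc j => ⟨_, mem_box.1 hc j⟩)
    ?_ ?_ ?_ ?_ ?_
  · intro i _
    exact mem_box.2 fun j => (i j).2
  all_goals simp

/-- The cube `Λ_{kN}` is tiled by the translates `k r + Λ_k`, `r ∈ Λ_N`. -/
lemma sum_box_mul {M : Type*} [AddCommMonoid M] {k : ℕ} (hk : 0 < k) (N : ℕ) (φ : Site d → M) :
    ∑ r ∈ box d N, ∑ c ∈ box d k, φ (c + k • r) = ∑ c ∈ box d (k * N), φ c := by
  rw [← Finset.sum_product']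
  refine Finset.sum_bij' (fun p _ => p.2 + k • p.1)
    (fun c _ => (fun j => c j / k, fun j => c j % k))
    ?_ ?_ ?_ ?_ ?_
  · rintro ⟨r, c⟩ h
    simp only [Finset.mem_product, mem_box] at h ⊢
    intro j
    have h1 := h.1 j
    have h2 := h.2 j
    simp only [Pi.add_apply, Pi.smul_apply, smul_eq_mul]
    nlinarith
  · intro c h
    simp only [Finset.mem_product, mem_box] at h ⊢
    exact ⟨fun j => Nat.div_lt_of_lt_mul (h j), fun j => Nat.mod_lt _ hk⟩
  · rintro ⟨r, c⟩ h
    simp only [Finset.mem_product, mem_box] at h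
    ext j
    · simp [Nat.add_mul_div_left _ _ hk, Nat.div_eq_of_lt (h.2 j)]
    · simp [Nat.mod_eq_of_lt (h.2 j)]
  · intro c _
    ext j
    simp [Nat.mod_add_div]
  · intro _ _
    rfl

lemma abs_sum_sub_sum_le {ι : Type*} {s t : Finset ι} (hst : s ⊆ t) {φ : ι → ℝ} {C : ℝ}
    (hφ : ∀ i, |φ i| ≤ C) :
    |∑ i ∈ t, φ i - ∑ i ∈ s, φ i| ≤ ((t.card : ℝ) - s.card) * C := by
  classical
  rw [← Finset.sum_sdiff hst, add_sub_cancel_right]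
  refine (Finset.abs_sum_le_sum_abs _ _).trans ((Finset.sum_le_card_nsmul _ _ C fun i _ => hφ i).trans ?_)
  rw [nsmul_eq_mul, Finset.card_sdiff_of_subset hst, Nat.cast_sub (Finset.card_le_card hst)]

/-- Translating the summation cube only produces a boundary term. -/
lemma abs_sum_box_add_sub_le {φ : Site d → ℝ} {C : ℝ} (hφ : ∀ i, |φ i| ≤ C) (r : Site d) {R : ℕ}
    (hR : ∀ j, r j ≤ R) (n : ℕ) :
    |∑ c ∈ box d n, φ (c + r) - ∑ c ∈ box d n, φ c| ≤
      2 * C * ((n : ℝ) ^ d - ((n - R : ℕ) : ℝ) ^ d) := by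
  classical
  have h1 := abs_sum_sub_sum_le (box_mono (d := d) (Nat.sub_le n R)) (φ := fun c => φ (c + r))
    (fun i => hφ _)
  have hsub : (box d (n - R)).image (· + r) ⊆ box d n := by
    intro c hc
    obtain ⟨a, ha, rfl⟩ := Finset.mem_image.1 hc
    refine mem_box.2 fun j => ?_
    have := mem_box.1 ha j
    have := hR j
    simp only [Pi.add_apply]
    omega
  have h2 := abs_sum_sub_sum_le hsub hφ
  rw [Finset.sum_image fun a _ b _ hab => add_right_cancel hab,
    Finset.card_image_of_injective _ (add_left_injective r)] at h2
  simp only [card_box, Nat.cast_pow] at h1 h2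
  have := abs_sub_le (∑ c ∈ box d n, φ (c + r)) (∑ c ∈ box d (n - R), φ (c + r))
    (∑ c ∈ box d n, φ c)
  rw [abs_sub_comm (∑ c ∈ box d (n - R), φ (c + r))] at this
  linarith

lemma tendsto_boundary_div (d R : ℕ) :
    Tendsto (fun n : ℕ => ((n : ℝ) ^ d - ((n - R : ℕ) : ℝ) ^ d) / (n : ℝ) ^ d) atTop (𝓝 0) := by
  have h0 : Tendsto (fun n : ℕ => (1 : ℝ) - (1 - (R : ℝ) / n) ^ d) atTop (𝓝 0) := by
    have h1 : Tendsto (fun n : ℕ => (R : ℝ) / n) atTop (𝓝 0) := tendsto_const_div_atTop_nhds_zero_nat _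
    simpa using ((h1.const_sub 1).pow d).const_sub 1
  refine h0.congr' ?_
  filter_upwards [eventually_ge_atTop (R + 1)] with n hn
  have hn0 : (n : ℝ) ≠ 0 := by
    have : 0 < n := by omega
    positivity
  rw [Nat.cast_sub (by omega), sub_div, div_self (pow_ne_zero _ hn0), ← div_pow, sub_div, div_self hn0]

/-- A discrete Vitali covering estimate for cubes. -/
lemma card_mul_le_of_large_cubes {φ : Site d → ℝ} (hφ : ∀ c, 0 ≤ φ c) {lam : ℝ} (hlam : 0 ≤ lam)
    {M N : ℕ} {B : Finset (Site d)} (hB : B ⊆ box d M) (ν : Site d → ℕ)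
    (hν : ∀ c ∈ B, 1 ≤ ν c ∧ ν c ≤ N ∧ lam * (ν c : ℝ) ^ d ≤ ∑ a ∈ box d (ν c), φ (a + c)) :
    lam * B.card ≤ 4 ^ d * ∑ c ∈ box d (M + N), φ c := by
  classical
  set Q : Site d → Finset (Site d) := fun c => (box d (ν c)).image (· + c) with hQ
  have memQ : ∀ {c x : Site d}, x ∈ Q c → ∀ j, c j ≤ x j ∧ x j < c j + ν c := by
    intro c x hx j
    obtain ⟨a, ha, rfl⟩ := Finset.mem_image.1 hx
    have := mem_box.1 ha j
    simp only [Pi.add_apply]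
    omega
  obtain ⟨u, huB, hdisj, hcov⟩ := Vitali.exists_disjoint_subfamily_covering_enlargement
    (fun c => (Q c : Set (Site d))) (B : Set (Site d)) (fun c => (ν c : ℝ)) 2 (by norm_num)
    (fun _ _ => Nat.cast_nonneg _) N (fun a ha => by exact_mod_cast (hν a ha).2.1)
    (fun a ha => ⟨0 + a, Finset.mem_coe.2 <| Finset.mem_image_of_mem _ <|
      mem_box.2 fun j => (hν a ha).1⟩)
  obtain ⟨U, rfl⟩ : ∃ U : Finset (Site d), (U : Set (Site d)) = u :=
    ⟨(B.finite_toSet.subset huB).toFinset, by simp⟩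
  set P : Site d → Finset (Site d) := fun b =>
    Fintype.piFinset fun j => Finset.Ico (b j + 1 - 2 * ν b) (b j + 2 * ν b) with hP
  have hBP : B ⊆ U.biUnion P := by
    intro a ha
    obtain ⟨b, hb, ⟨x, hxa, hxb⟩, hle⟩ := hcov a ha
    have hle' : ν a ≤ 2 * ν b := by exact_mod_cast hle
    refine Finset.mem_biUnion.2 ⟨b, hb, Fintype.mem_piFinset.2 fun j => Finset.mem_Ico.2 ?_⟩
    have := memQ hxa j
    have := memQ hxb j
    omega
  have hcardP : ∀ b, (P b).card ≤ (4 * ν b) ^ d := by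
    intro b
    rw [hP, Fintype.card_piFinset]
    refine (Finset.prod_le_pow_card _ _ (4 * ν b) fun j _ => ?_).trans (by simp)
    rw [Nat.card_Ico]
    omega
  have h1 : B.card ≤ ∑ b ∈ U, (4 * ν b) ^ d :=
    (Finset.card_le_card hBP).trans (Finset.card_biUnion_le.trans (Finset.sum_le_sum fun b _ => hcardP b))
  have h2 : (B.card : ℝ) ≤ ∑ b ∈ U, 4 ^ d * (ν b : ℝ) ^ d := by
    have : (B.card : ℝ) ≤ ∑ b ∈ U, (4 * (ν b : ℝ)) ^ d := by exact_mod_cast h1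
    simpa only [mul_pow] using this
  have h3 : ∑ b ∈ U, ∑ x ∈ Q b, φ x ≤ ∑ c ∈ box d (M + N), φ c := by
    rw [← Finset.sum_biUnion]
    · refine Finset.sum_le_sum_of_subset_of_nonneg ?_ fun c _ _ => hφ c
      intro x hx
      obtain ⟨b, hb, hxb⟩ := Finset.mem_biUnion.1 hx
      refine mem_box.2 fun j => ?_
      have := memQ hxb j
      have := mem_box.1 (hB (huB hb)) j
      have := (hν b (huB hb)).2.1
      omega
    · intro a ha b hb hab
      exact Finset.disjoint_coe.1 (hdisj ha hb hab)
  calc lam * B.card ≤ lam * ∑ b ∈ U, 4 ^ d * (ν b : ℝ) ^ d := by gcongr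
    _ = 4 ^ d * ∑ b ∈ U, lam * (ν b : ℝ) ^ d := by
      rw [Finset.mul_sum, Finset.mul_sum]
      exact Finset.sum_congr rfl fun _ _ => by ring
    _ ≤ 4 ^ d * ∑ b ∈ U, ∑ x ∈ Q b, φ x := by
      gcongr with b hb
      rw [hQ, Finset.sum_image fun a _ b _ hab => add_right_cancel hab]
      exact (hν b (huB hb)).2.2
    _ ≤ _ := by gcongr

lemma shift_shift (r s : Site d) (x : Config A d) : shift r (shift s x) = shift (r + s) x := by
  ext i
  simp [shift, add_assoc]

lemma measurable_shift (r : Site d) : Measurable (shift r : Config A d → Config A d) :=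
  measurable_pi_lambda _ fun i => measurable_pi_apply (i + r)

lemma Stationary.measurePreserving {μ : Measure (Config A d)} (hμ : Stationary μ) (r : Site d) :
    MeasurePreserving (shift r) μ μ :=
  ⟨measurable_shift r, hμ r⟩

lemma integrable_of_bounded {μ : Measure (Config A d)} [IsFiniteMeasure μ] {e : Config A d → ℝ}
    (hm : Measurable e) {C : ℝ} (hC : ∀ x, |e x| ≤ C) : Integrable e μ :=
  Integrable.of_bound hm.aestronglyMeasurable C (Eventually.of_forall hC)

lemma Stationary.integral_sum_box {μ : Measure (Config A d)} (hμ : Stationary μ)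
    {e : Config A d → ℝ} (he : Integrable e μ) (n : ℕ) :
    ∫ x, ∑ c ∈ box d n, e (shift c x) ∂μ = (n : ℝ) ^ d * ∫ x, e x ∂μ := by
  have hc : ∀ c : Site d, ∫ x, e (shift c x) ∂μ = ∫ x, e x ∂μ := by
    intro c
    conv_rhs => rw [← hμ c]
    rw [integral_map (measurable_shift c).aemeasurable]
    rw [hμ c]
    exact he.aestronglyMeasurable
  rw [integral_finsetSum (f := fun c x => e (shift c x)) _ fun c _ =>
    (hμ.measurePreserving c).integrable_comp_of_integrable he]
  simp [hc, card_box]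

/-- The weak-type maximal inequality for averages over cubes. -/
lemma Stationary.maximal_ineq {μ : Measure (Config A d)} [IsProbabilityMeasure μ]
    (hμ : Stationary μ) {e : Config A d → ℝ} (hm : Measurable e) (h0 : ∀ x, 0 ≤ e x) {C : ℝ}
    (hC : ∀ x, |e x| ≤ C) {lam : ℝ} (hlam : 0 ≤ lam) {N : ℕ} (hN : 1 ≤ N) :
    lam * μ.real {x | ∃ n, 1 ≤ n ∧ n ≤ N ∧ lam * (n : ℝ) ^ d < ∑ c ∈ box d n, e (shift c x)} ≤
      8 ^ d * ∫ x, e x ∂μ := by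
  classical
  set E : Set (Config A d) :=
    {x | ∃ n, 1 ≤ n ∧ n ≤ N ∧ lam * (n : ℝ) ^ d < ∑ c ∈ box d n, e (shift c x)} with hE
  have hEm : MeasurableSet E := by
    have : E = ⋃ n ∈ Finset.Icc 1 N,
        {x | lam * (n : ℝ) ^ d < ∑ c ∈ box d n, e (shift c x)} := by
      ext x
      simp [hE, and_assoc]
    rw [this]
    refine Finset.measurableSet_biUnion _ fun n _ => measurableSet_lt measurable_const ?_
    exact Finset.measurable_sum _ fun c _ => hm.comp (measurable_shift c)
  have hpt : ∀ x, lam * ∑ c ∈ box d N, E.indicator 1 (shift c x) ≤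
      4 ^ d * ∑ c ∈ box d (N + N), e (shift c x) := by
    intro x
    set B := (box d N).filter fun c => shift c x ∈ E with hB
    have hBE : ∀ c ∈ B, shift c x ∈ E := fun c hc => (Finset.mem_filter.1 hc).2
    choose! ν hν using hBE
    have := card_mul_le_of_large_cubes (φ := fun c => e (shift c x)) (fun c => h0 _) hlam
      (Finset.filter_subset _ _ : B ⊆ box d N) ν (N := N) fun c hc =>
        ⟨(hν c hc).1, (hν c hc).2.1, by
          have := (hν c hc).2.2.le
          simpa only [shift_shift] using this⟩
    convert this using 2
    rw [Finset.card_filter]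
    push_cast
    exact Finset.sum_congr rfl fun c _ => by simp [Set.indicator_apply]
  have hIE : Integrable (E.indicator (1 : Config A d → ℝ)) μ :=
    (integrable_const (1 : ℝ)).indicator hEm
  have he := integrable_of_bounded (μ := μ) hm hC
  have hsum : ∀ {f : Config A d → ℝ}, Integrable f μ → ∀ n,
      Integrable (fun x => ∑ c ∈ box d n, f (shift c x)) μ := fun hf n =>
    integrable_finsetSum _ fun c _ => (hμ.measurePreserving c).integrable_comp_of_integrable hf
  have hint := integral_mono ((hsum hIE N).const_mul lam) ((hsum he (N + N)).const_mul (4 ^ d)) hpt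
  rw [integral_const_mul, integral_const_mul, hμ.integral_sum_box hIE, hμ.integral_sum_box he,
    integral_indicator_one hEm] at hint
  have hNpos : (0 : ℝ) < (N : ℝ) ^ d := by positivity
  refine le_of_mul_le_mul_left (a := (N : ℝ) ^ d) ?_ hNpos
  calc (N : ℝ) ^ d * (lam * μ.real E) = lam * ((N : ℝ) ^ d * μ.real E) := by ring
    _ ≤ 4 ^ d * (((N + N : ℕ) : ℝ) ^ d * ∫ x, e x ∂μ) := hint
    _ = (N : ℝ) ^ d * (8 ^ d * ∫ x, e x ∂μ) := by
      rw [show ((N + N : ℕ) : ℝ) = 2 * N by push_cast; ring, mul_pow,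
        show (8 : ℝ) = 4 * 2 by norm_num, mul_pow]
      ring

/-- A bounded nonnegative observable with small mean has eventually small cube averages. -/
lemma ErgodicShift.eventually_sum_box_le {μ : Measure (Config A d)} [IsProbabilityMeasure μ]
    (hμ : ErgodicShift μ) {e : Config A d → ℝ} (hm : Measurable e) (h0 : ∀ x, 0 ≤ e x) {C : ℝ}
    (hC : ∀ x, |e x| ≤ C) {lam : ℝ} (hlam : 8 ^ d * ∫ x, e x ∂μ < lam) :
    ∀ᵐ x ∂μ, ∀ lam' > lam, ∀ᶠ n : ℕ in atTop,
      ∑ c ∈ box d n, e (shift c x) ≤ lam' * (n : ℝ) ^ d := by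
  have hlam0 : 0 < lam := lt_of_le_of_lt (mul_nonneg (by positivity) (integral_nonneg h0)) hlam
  set L : Set (Config A d) := {x | ∃ j : ℕ, ∃ᶠ n : ℕ in atTop,
    (lam + 1 / (j + 1)) * (n : ℝ) ^ d < ∑ c ∈ box d n, e (shift c x)} with hL
  have hLm : MeasurableSet L := by
    have : L = ⋃ j : ℕ, ⋂ N : ℕ, ⋃ n : ℕ, ⋃ _ : N ≤ n,
        {x | (lam + 1 / (j + 1)) * (n : ℝ) ^ d < ∑ c ∈ box d n, e (shift c x)} := by
      ext x
      simp [hL, frequently_atTop]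
    rw [this]
    refine MeasurableSet.iUnion fun j => MeasurableSet.iInter fun N => MeasurableSet.iUnion fun n =>
      MeasurableSet.iUnion fun _ => measurableSet_lt measurable_const ?_
    exact Finset.measurable_sum _ fun c _ => hm.comp (measurable_shift c)
  have key : ∀ {φ ψ : ℕ → ℝ} {R : ℕ},
      (∀ n, |φ n - ψ n| ≤ 2 * C * ((n : ℝ) ^ d - ((n - R : ℕ) : ℝ) ^ d)) →
      (∃ j : ℕ, ∃ᶠ n : ℕ in atTop, (lam + 1 / (j + 1)) * (n : ℝ) ^ d < φ n) →
      ∃ j : ℕ, ∃ᶠ n : ℕ in atTop, (lam + 1 / (j + 1)) * (n : ℝ) ^ d < ψ n := by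
    rintro φ ψ R hR ⟨j, hj⟩
    refine ⟨j + 1, ?_⟩
    set η : ℝ := 1 / ((j : ℝ) + 1) - 1 / (((j + 1 : ℕ) : ℝ) + 1) with hη
    have hηpos : 0 < η := by
      rw [hη, sub_pos]
      apply one_div_lt_one_div_of_lt <;> push_cast <;> first | positivity | linarith
    have hb := (tendsto_boundary_div d R).const_mul (2 * C)
    rw [mul_zero] at hb
    refine (hj.and_eventually ((hb.eventually_lt_const hηpos).and (eventually_gt_atTop 0))).mono ?_
    rintro n ⟨h1, h2, hn⟩
    have hn' : (0 : ℝ) < (n : ℝ) ^ d := by positivity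
    rw [← mul_div_assoc, div_lt_iff₀ hn'] at h2
    have h3 := (abs_le.1 (hR n)).2
    have h4 : η * (n : ℝ) ^ d = 1 / ((j : ℝ) + 1) * (n : ℝ) ^ d
      - 1 / (((j + 1 : ℕ) : ℝ) + 1) * (n : ℝ) ^ d := by rw [hη]; ring
    nlinarith
  have hinv : ∀ r : Site d, shift r ⁻¹' L = L := by
    intro r
    have hbd : ∀ x n, |∑ c ∈ box d n, e (shift c (shift r x)) - ∑ c ∈ box d n, e (shift c x)| ≤
        2 * C * ((n : ℝ) ^ d - ((n - (∑ j, r j) : ℕ) : ℝ) ^ d) := by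
      intro x n
      simp only [shift_shift]
      exact abs_sum_box_add_sub_le (φ := fun c => e (shift c x)) (fun i => hC _) r
        (fun j => Finset.single_le_sum (fun _ _ => Nat.zero_le _) (Finset.mem_univ j)) n
    ext x
    exact ⟨key (hbd x), key fun n => by rw [abs_sub_comm]; exact hbd x n⟩
  have hsmall : μ.real L < 1 := by
    set F : ℕ → Set (Config A d) := fun N =>
      {x | ∃ n, 1 ≤ n ∧ n ≤ N ∧ lam * (n : ℝ) ^ d < ∑ c ∈ box d n, e (shift c x)} with hF
    have hFmono : Monotone F := by
      rintro N N' hN x ⟨n, h1, h2, h3⟩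
      exact ⟨n, h1, h2.trans hN, h3⟩
    have hLF : L ⊆ ⋃ N, F N := by
      rintro x ⟨j, hj⟩
      obtain ⟨n, hlt, hn⟩ := (hj.and_eventually (eventually_gt_atTop 0)).exists
      refine Set.mem_iUnion.2 ⟨n, n, hn, le_rfl, lt_of_le_of_lt ?_ hlt⟩
      gcongr
      exact le_add_of_nonneg_right (by positivity)
    have hlim : Tendsto (fun N => μ.real (F N)) atTop (𝓝 (μ.real (⋃ N, F N))) :=
      (ENNReal.tendsto_toReal (measure_ne_top _ _)).comp (tendsto_measure_iUnion_atTop hFmono)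
    have hle : μ.real (⋃ N, F N) ≤ (8 ^ d * ∫ x, e x ∂μ) / lam := by
      refine le_of_tendsto hlim ?_
      filter_upwards [eventually_ge_atTop 1] with N hN
      rw [le_div_iff₀ hlam0, mul_comm]
      exact hμ.1.maximal_ineq hm h0 hC hlam0.le hN
    calc μ.real L ≤ μ.real (⋃ N, F N) := measureReal_mono hLF
      _ ≤ _ := hle
      _ < 1 := (div_lt_one hlam0).2 hlam
  have hLnull : μ L = 0 := by
    rcases hμ.2 L hLm hinv with h | h
    · exact h
    · simp [measureReal_def, h] at hsmall
  filter_upwards [measure_eq_zero_iff_ae_notMem.1 hLnull] with x hx lam' hlam'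
  obtain ⟨j, hj⟩ := exists_nat_one_div_lt (sub_pos.2 hlam')
  have : ¬ ∃ᶠ n : ℕ in atTop,
    (lam + 1 / (j + 1)) * (n : ℝ) ^ d < ∑ c ∈ box d n, e (shift c x) := fun h => hx ⟨j, h⟩
  filter_upwards [not_frequently.1 this] with n hn
  refine (not_lt.1 hn).trans ?_
  gcongr
  linarith

/-- Bounded observables whose cube averages tend to `0` uniformly. -/
def UniformlyNull (v : Config A d → ℝ) : Prop :=
  Measurable v ∧ (∃ C, ∀ x, |v x| ≤ C) ∧ ∃ β : ℕ → ℝ, Tendsto β atTop (𝓝 0) ∧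
    ∀ k, 0 < k → ∀ x, |∑ c ∈ box d k, v (shift c x)| ≤ β k * (k : ℝ) ^ d

namespace UniformlyNull

lemma zero : UniformlyNull (0 : Config A d → ℝ) :=
  ⟨measurable_const, ⟨0, by simp⟩, 0, tendsto_const_nhds, by simp⟩

lemma add {v w : Config A d → ℝ} (hv : UniformlyNull v) (hw : UniformlyNull w) :
    UniformlyNull (v + w) := by
  obtain ⟨hvm, ⟨C, hC⟩, β, hβ, hvβ⟩ := hv
  obtain ⟨hwm, ⟨D, hD⟩, γ, hγ, hwγ⟩ := hw
  refine ⟨hvm.add hwm, ⟨C + D, fun x => (abs_add_le _ _).trans (add_le_add (hC x) (hD x))⟩,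
    fun k => β k + γ k, by simpa using hβ.add hγ, fun k hk x => ?_⟩
  simp only [Pi.add_apply, Finset.sum_add_distrib, add_mul]
  exact (abs_add_le _ _).trans (add_le_add (hvβ k hk x) (hwγ k hk x))

lemma smul {v : Config A d → ℝ} (a : ℝ) (hv : UniformlyNull v) : UniformlyNull (a • v) := by
  obtain ⟨hvm, ⟨C, hC⟩, β, hβ, hvβ⟩ := hv
  refine ⟨hvm.const_smul a, ⟨|a| * C, fun x => ?_⟩, fun k => |a| * β k,
    by simpa using hβ.const_mul |a|, fun k hk x => ?_⟩
  · simp only [Pi.smul_apply, smul_eq_mul, abs_mul]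
    exact mul_le_mul_of_nonneg_left (hC x) (abs_nonneg a)
  · simp only [Pi.smul_apply, smul_eq_mul, ← Finset.mul_sum, abs_mul, mul_assoc]
    exact mul_le_mul_of_nonneg_left (hvβ k hk x) (abs_nonneg a)

lemma coboundary {g : Config A d → ℝ} (hg : Measurable g) {C : ℝ} (hC : ∀ x, |g x| ≤ C)
    (r : Site d) : UniformlyNull (fun x => g (shift r x) - g x) := by
  set R := ∑ j, r j
  have hb := (tendsto_boundary_div d R).const_mul (2 * C)
  rw [mul_zero] at hb
  refine ⟨(hg.comp (measurable_shift r)).sub hg,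
    ⟨C + C, fun x => (abs_sub _ _).trans (add_le_add (hC _) (hC x))⟩, _, hb, fun k hk x => ?_⟩
  have hk' : (k : ℝ) ^ d ≠ 0 := by positivity
  rw [Finset.sum_sub_distrib, mul_assoc, div_mul_cancel₀ _ hk']
  simp only [shift_shift, add_comm r]
  exact abs_sum_box_add_sub_le (φ := fun c => g (shift c x)) (fun i => hC _) r
    (fun j => Finset.single_le_sum (fun _ _ => Nat.zero_le _) (Finset.mem_univ j)) k

lemma memLp {v : Config A d → ℝ} (hv : UniformlyNull v) (μ : Measure (Config A d))
    [IsFiniteMeasure μ] : MemLp v 2 μ := by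
  obtain ⟨hvm, ⟨C, hC⟩, -⟩ := hv
  exact MemLp.of_bound hvm.aestronglyMeasurable C (Eventually.of_forall hC)

end UniformlyNull

/-- For an ergodic measure, almost everywhere invariant functions are almost everywhere constant. -/
lemma ErgodicShift.ae_const {μ : Measure (Config A d)} [IsProbabilityMeasure μ]
    (hμ : ErgodicShift μ) {u : Config A d → ℝ} (hu : Measurable u)
    (hinv : ∀ r : Site d, ∀ᵐ x ∂μ, u (shift r x) = u x) : ∃ a, ∀ᵐ x ∂μ, u x = a := by
  refine exists_eventuallyEq_const_of_forall_separating MeasurableSet fun S hS => ?_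
  set E : Set (Config A d) := {x | ∃ R : Site d, ∀ c, R ≤ c → u (shift c x) ∈ S} with hE
  have hEm : MeasurableSet E := by
    have : E = ⋃ R : Site d, ⋂ c : Site d, ⋂ _ : R ≤ c, (fun x => u (shift c x)) ⁻¹' S := by
      ext x
      simp [hE]
    rw [this]
    exact MeasurableSet.iUnion fun R => MeasurableSet.iInter fun c => MeasurableSet.iInter fun _ =>
      hu.comp (measurable_shift c) hS
  have hEinv : ∀ r : Site d, shift r ⁻¹' E = E := by
    intro r
    ext x
    simp only [hE, Set.mem_preimage, Set.mem_ofPred_eq, shift_shift]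
    constructor
    · rintro ⟨R, hR⟩
      refine ⟨R + r, fun c hc => ?_⟩
      have hrc : r ≤ c := le_trans (le_add_of_nonneg_left zero_le) hc
      have := hR (c - r) (le_tsub_of_add_le_right hc)
      rwa [tsub_add_cancel_of_le hrc] at this
    · rintro ⟨R, hR⟩
      exact ⟨R, fun c hc => hR _ (hc.trans (le_add_of_nonneg_right zero_le))⟩
  have hall : ∀ᵐ x ∂μ, x ∈ E ↔ u x ∈ S := by
    filter_upwards [ae_all_iff.2 hinv] with x hx
    simp only [hE, Set.mem_ofPred_eq, hx]
    exact ⟨fun ⟨R, hR⟩ => hR R le_rfl, fun h => ⟨0, fun _ _ => h⟩⟩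
  rcases hμ.2 E hEm hEinv with h | h
  · right
    filter_upwards [hall, measure_eq_zero_iff_ae_notMem.1 h] with x h1 h2 h3
    exact h2 (h1.2 h3)
  · left
    filter_upwards [hall, (mem_ae_iff_prob_eq_one hEm).2 h] with x h1 h2
    exact h1.1 h2

/-- The uniformly null observables as a subspace of `L²`. -/
def nullSubspace (μ : Measure (Config A d)) : Submodule ℝ (Lp ℝ 2 μ) where
  carrier := {F | ∃ v, UniformlyNull v ∧ F =ᵐ[μ] v}
  zero_mem' := ⟨0, UniformlyNull.zero, Lp.coeFn_zero ℝ 2 μ⟩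
  add_mem' := by
    rintro F G ⟨v, hv, hF⟩ ⟨w, hw, hG⟩
    exact ⟨v + w, hv.add hw, (Lp.coeFn_add F G).trans (hF.add hG)⟩
  smul_mem' := by
    rintro a F ⟨v, hv, hF⟩
    exact ⟨a • v, hv.smul a, (Lp.coeFn_smul a F).trans (hF.const_smul a)⟩

/-- Every square integrable function orthogonal to the uniformly null observables is constant. -/
lemma ErgodicShift.ae_const_of_mem_orthogonal {μ : Measure (Config A d)} [IsProbabilityMeasure μ]
    (hμ : ErgodicShift μ) {u : Lp ℝ 2 μ} (hu : u ∈ (nullSubspace μ)ᗮ) :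
    ∃ a, ∀ᵐ x ∂μ, u x = a := by
  have hinv : ∀ r : Site d, ∀ᵐ x ∂μ, u (shift r x) = u x := by
    intro r
    set hr := hμ.1.measurePreserving r
    set U : Lp ℝ 2 μ →+ Lp ℝ 2 μ :=
      Lp.compMeasurePreserving (E := ℝ) (p := 2) (shift r) hr with hU
    have hUcont : Continuous U := (Lp.isometry_compMeasurePreserving hr).continuous
    have horth : ∀ g : Lp ℝ 2 μ, inner ℝ (U g - g) u = 0 := by
      refine Lp.induction (by norm_num) _ ?_ ?_ ?_
      · intro c s hs hμs
        refine hu _ ⟨_, UniformlyNull.coboundary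
          (g := s.indicator fun _ => c) (measurable_const.indicator hs) (C := |c|) ?_ r, ?_⟩
        · intro x
          by_cases hx : x ∈ s <;> simp [hx]
        · have h1 : (Lp.simpleFunc.indicatorConst 2 hs hμs.ne c : Lp ℝ 2 μ) =ᵐ[μ]
              s.indicator fun _ => c := by
            rw [Lp.simpleFunc.coe_indicatorConst]
            exact indicatorConstLp_coeFn
          have h2 := Lp.coeFn_compMeasurePreserving
            (Lp.simpleFunc.indicatorConst 2 hs hμs.ne c : Lp ℝ 2 μ) hr
          filter_upwards [h1, h2, hr.quasiMeasurePreserving.ae_eq_comp h1,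
            Lp.coeFn_sub (U (Lp.simpleFunc.indicatorConst 2 hs hμs.ne c : Lp ℝ 2 μ))
              (Lp.simpleFunc.indicatorConst 2 hs hμs.ne c : Lp ℝ 2 μ)] with x e1 e2 e3 e4
          rw [e4, Pi.sub_apply, e1, hU, e2, e3]
          rfl
      · intro f g hf hg _ h1 h2
        have : U (hf.toLp f + hg.toLp g) - (hf.toLp f + hg.toLp g) =
            (U (hf.toLp f) - hf.toLp f) + (U (hg.toLp g) - hg.toLp g) := by
          rw [hU, map_add]
          abel
        rw [this, inner_add_left, h1, h2, add_zero]
      · exact isClosed_eq ((hUcont.sub continuous_id).inner continuous_const) continuous_const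
    have hnorm : ‖U u‖ = ‖u‖ := Lp.norm_compMeasurePreserving u hr
    have hUu : U u = u := by
      have h1 := horth u
      rw [inner_sub_left, real_inner_self_eq_norm_sq] at h1
      have h2 := norm_sub_sq_real (U u) u
      rw [hnorm] at h2
      rw [← sub_eq_zero, ← norm_eq_zero, ← sq_eq_zero_iff]
      linarith
    have h3 := Lp.coeFn_compMeasurePreserving u hr
    change (U u : Config A d → ℝ) =ᵐ[μ] _ at h3
    rw [hUu] at h3
    exact h3.symm
  exact hμ.ae_const (Lp.stronglyMeasurable u).measurable hinv

/-- A bounded observable equals its mean, up to a uniformly null one, up to an `L¹`-small error. -/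
lemma ErgodicShift.exists_uniformlyNull_approx {μ : Measure (Config A d)} [IsProbabilityMeasure μ]
    (hμ : ErgodicShift μ) {f : Config A d → ℝ} (hf : Measurable f) {C : ℝ} (hC : ∀ x, |f x| ≤ C)
    {ε : ℝ} (hε : 0 < ε) :
    ∃ v, UniformlyNull v ∧ ∫ x, |f x - ∫ y, f y ∂μ - v x| ∂μ ≤ ε := by
  set a := ∫ y, f y ∂μ with ha
  have hfi := integrable_of_bounded (μ := μ) hf hC
  have hfL : MemLp (fun x => f x - a) 2 μ :=
    (MemLp.of_bound hf.aestronglyMeasurable C (Eventually.of_forall hC)).sub (memLp_const a)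
  have hmem : hfL.toLp ∈ (nullSubspace μ)ᗮᗮ := by
    intro u hu
    obtain ⟨b, hb⟩ := hμ.ae_const_of_mem_orthogonal hu
    rw [L2.inner_def]
    have : ∫ x, inner ℝ (u x) (hfL.toLp (fun x => f x - a) x) ∂μ = ∫ x, (f x - a) * b ∂μ := by
      refine integral_congr_ae ?_
      filter_upwards [hb, hfL.coeFn_toLp] with x h1 h2
      rw [h1, h2]
      simp
    rw [this, integral_mul_const, integral_sub hfi (integrable_const _)]
    simp [ha]
  rw [Submodule.orthogonal_orthogonal_eq_closure] at hmem
  obtain ⟨V, ⟨v, hv, hVv⟩, hdist⟩ := Metric.mem_closure_iff.1 hmem ε hε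
  refine ⟨v, hv, ?_⟩
  have hdL : MemLp (fun x => f x - a - v x) 2 μ := hfL.sub (hv.memLp μ)
  have h1 : eLpNorm (fun x => f x - a - v x) 1 μ ≤ ENNReal.ofReal ε := by
    refine (eLpNorm_le_eLpNorm_of_exponent_le (q := 2) (by norm_num) hdL.1).trans ?_
    rw [dist_eq_norm, Lp.norm_def] at hdist
    rw [← ENNReal.ofReal_toReal hdL.2.ne]
    refine ENNReal.ofReal_le_ofReal ?_
    refine le_trans (le_of_eq ?_) hdist.le
    refine congrArg ENNReal.toReal (eLpNorm_congr_ae ?_)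
    filter_upwards [Lp.coeFn_sub (hfL.toLp (fun x => f x - a)) V, hVv, hfL.coeFn_toLp] with x e1 e2 e3
    rw [e1, Pi.sub_apply, e2, e3]
  have h2 := integral_norm_eq_lintegral_enorm hdL.1
  rw [eLpNorm_one_eq_lintegral_enorm] at h1
  simp only [Real.norm_eq_abs] at h2
  rw [h2]
  exact ENNReal.toReal_le_of_le_ofReal hε.le h1

lemma wordAt_shift (x : Config A d) (k : ℕ) (r c : Site d) :
    wordAt (shift r x) k c = wordAt x k (c + r) := by
  ext i
  simp only [wordAt, shift]
  congr 2
  ext j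
  simp only [Pi.add_apply]
  omega

lemma measurable_wordAt (k : ℕ) (c : Site d) :
    Measurable (fun x : Config A d => wordAt x k c) :=
  measurable_pi_lambda _ fun _ => measurable_pi_apply _

lemma wordDist_eq_map (μ : Measure (Config A d)) (k : ℕ) (w : Word A d k) :
    wordDist μ k w = (μ.map fun x => wordAt x k 0).real {w} := by
  rw [measureReal_def, Measure.map_apply (measurable_wordAt k 0) (measurableSet_singleton w)]
  rfl

lemma wordDist_nonneg (μ : Measure (Config A d)) (k : ℕ) (w : Word A d k) :
    0 ≤ wordDist μ k w := ENNReal.toReal_nonneg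

lemma wordDist_le_one (μ : Measure (Config A d)) [IsProbabilityMeasure μ] (k : ℕ)
    (w : Word A d k) : wordDist μ k w ≤ 1 := measureReal_le_one

lemma integral_comp_wordAt (μ : Measure (Config A d)) [IsProbabilityMeasure μ] (k : ℕ)
    (g : Word A d k → ℝ) :
    ∫ x, g (wordAt x k 0) ∂μ = ∑ w, wordDist μ k w * g w := by
  have := Measure.isProbabilityMeasure_map (μ := μ) (measurable_wordAt (A := A) k 0).aemeasurable
  rw [← integral_map (μ := μ) (φ := fun x => wordAt x k 0) (measurable_wordAt k 0).aemeasurable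
    (measurable_of_finite g).aestronglyMeasurable, integral_fintype (Integrable.of_finite)]
  simp [wordDist_eq_map]

lemma sum_wordDist (μ : Measure (Config A d)) [IsProbabilityMeasure μ] (k : ℕ) :
    ∑ w, wordDist μ k w = 1 := by
  simpa using (integral_comp_wordAt μ k fun _ => 1).symm

lemma Stationary.ae_wordDist_pos {μ : Measure (Config A d)} [IsProbabilityMeasure μ]
    (hμ : Stationary μ) (m : ℕ) : ∀ᵐ x ∂μ, ∀ c : Site d, 0 < wordDist μ m (wordAt x m c) := by
  have h0 : ∀ᵐ x ∂μ, 0 < wordDist μ m (wordAt x m 0) := by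
    have : ∀ w : Word A d m, ∀ᵐ x ∂μ, wordAt x m 0 = w → 0 < wordDist μ m w := by
      intro w
      rcases (wordDist_nonneg μ m w).eq_or_lt with h | h
      · have : μ {x | wordAt x m 0 = w} = 0 :=
          ((ENNReal.toReal_eq_zero_iff _).1 h.symm).resolve_right (measure_ne_top _ _)
        filter_upwards [measure_eq_zero_iff_ae_notMem.1 this] with x hx hxw
        exact absurd hxw hx
      · exact Eventually.of_forall fun _ _ => h
    filter_upwards [ae_all_iff.2 this] with x hx
    exact hx _ rfl
  refine ae_all_iff.2 fun c => ?_
  filter_upwards [(hμ.measurePreserving c).quasiMeasurePreserving.ae h0] with x hx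
  simpa [wordAt_shift] using hx

lemma entH_nonneg (hA : 1 < A) {W : Type*} [Fintype W] {p : W → ℝ} (h0 : ∀ w, 0 ≤ p w)
    (h1 : ∀ w, p w ≤ 1) : 0 ≤ entH A p := by
  rw [entH, ← Finset.sum_neg_distrib]
  refine Finset.sum_nonneg fun w _ => ?_
  rw [← mul_neg]
  exact mul_nonneg (h0 w) (neg_nonneg.2 <|
    Real.logb_nonpos (by exact_mod_cast hA) (h0 w) (h1 w))

lemma card_prod_ge_le {W ι : Type*} [Fintype W] [Fintype ι] [DecidableEq ι] {p : W → ℝ}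
    (h0 : ∀ w, 0 ≤ p w) (h1 : ∑ w, p w = 1) {θ : ℝ} (hθ : 0 < θ)
    [DecidablePred fun t : ι → W => θ ≤ ∏ r, p (t r)] :
    ((Finset.univ.filter fun t : ι → W => θ ≤ ∏ r, p (t r)).card : ℝ) ≤ θ⁻¹ := by
  rw [inv_eq_one_div, le_div_iff₀ hθ, ← nsmul_eq_mul]
  calc _ ≤ ∑ t ∈ Finset.univ.filter fun t : ι → W => θ ≤ ∏ r, p (t r), ∏ r, p (t r) :=
        Finset.card_nsmul_le_sum _ _ _ fun t ht => (Finset.mem_filter.1 ht).2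
    _ ≤ ∑ t : ι → W, ∏ r, p (t r) :=
        Finset.sum_le_sum_of_subset_of_nonneg (Finset.filter_subset _ _) fun t _ _ =>
          Finset.prod_nonneg fun r _ => h0 _
    _ = ∏ _r : ι, ∑ w, p w := (Fintype.prod_sum fun (_ : ι) w => p w).symm
    _ = 1 := by simp [h1]

/-- The `k`-words which, for some phase `s ∈ Λ_m`, are cut into `m`-words the product of whose
weights is at least `θ`. -/
def heavyWords {m : ℕ} (p : Word A d m → ℝ) (k q : ℕ) (θ : ℝ) : Set (Word A d k) :=
  {u | ∃ s ∈ box d m, ∃ x, wordAt x k 0 = u ∧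
    θ ≤ ∏ r : Fin d → Fin q, p (wordAt x m (s + m • fun j => (r j : ℕ)))}

lemma ncard_heavyWords_le (hA : 1 < A) {m : ℕ} (hm : 0 < m) {p : Word A d m → ℝ} (h0 : ∀ w, 0 ≤ p w)
    (h1 : ∑ w, p w = 1) {θ : ℝ} (hθ : 0 < θ) {k q : ℕ} (hkq : m * q + m ≤ k) :
    (Set.ncard (heavyWords p k q θ) : ℝ) ≤
      (m : ℝ) ^ d * (θ⁻¹ * (A : ℝ) ^ (k ^ d - (m * q) ^ d)) := by
  classical
  set T : Site d → Finset (Word A d k) := fun s => Finset.univ.filter fun u =>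
    ∃ x, wordAt x k 0 = u ∧ θ ≤ ∏ r : Fin d → Fin q, p (wordAt x m (s + m • fun j => (r j : ℕ)))
    with hT
  have hunion : heavyWords p k q θ = ((box d m).biUnion T : Finset (Word A d k)) := by
    ext u
    simp [heavyWords, hT]
  have hTcard : ∀ s ∈ box d m, ((T s).card : ℝ) ≤ θ⁻¹ * (A : ℝ) ^ (k ^ d - (m * q) ^ d) := by
    intro s hs
    have hex : ∀ u ∈ T s, ∃ x, wordAt x k 0 = u ∧
        θ ≤ ∏ r : Fin d → Fin q, p (wordAt x m (s + m • fun j => (r j : ℕ))) :=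
      fun u hu => (Finset.mem_filter.1 hu).2
    have : NeZero A := ⟨by omega⟩
    choose! X hX hXθ using hex
    set tile := (box d (m * q)).image (· + s) with htile
    have htk : tile ⊆ box d k := by
      intro c hc
      obtain ⟨a, ha, rfl⟩ := Finset.mem_image.1 hc
      refine mem_box.2 fun j => ?_
      have := mem_box.1 ha j
      have := mem_box.1 hs j
      simp only [Pi.add_apply]
      omega
    have hcard : (box d k \ tile).card = k ^ d - (m * q) ^ d := by
      rw [Finset.card_sdiff_of_subset htk, htile,
        Finset.card_image_of_injective _ (add_left_injective s), card_box, card_box]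
    set D := Finset.univ.filter fun t : (Fin d → Fin q) → Word A d m => θ ≤ ∏ r, p (t r) with hD
    have hle : (T s).card ≤ (D ×ˢ (Finset.univ : Finset (↥(box d k \ tile) → Fin A))).card := by
      refine Finset.card_le_card_of_injOn (fun u =>
        (fun r => wordAt (X u) m (s + m • fun j => (r j : ℕ)), fun c => X u c)) ?_ ?_
      · intro u hu
        exact Finset.mem_coe.2 (Finset.mem_product.2
          ⟨Finset.mem_filter.2 ⟨Finset.mem_univ _, hXθ u hu⟩, Finset.mem_univ _⟩)
      · intro u hu u' hu' heq
        obtain ⟨he1, he2⟩ := Prod.mk.inj heq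
        rw [← hX u hu, ← hX u' hu']
        suffices h : ∀ c ∈ box d k, X u c = X u' c by
          ext1 i
          exact h _ (mem_box.2 fun j => by simp)
        intro c hc
        by_cases hct : c ∈ tile
        · obtain ⟨b, hb, rfl⟩ := Finset.mem_image.1 hct
          have h2 := congrFun (congrFun he1 fun j =>
            ⟨b j / m, Nat.div_lt_of_lt_mul (mem_box.1 hb j)⟩)
            (fun j => ⟨b j % m, Nat.mod_lt _ hm⟩)
          have h3 : (fun j => (s + m • fun j => b j / m) j + b j % m) = b + s := by
            ext j
            have := Nat.div_add_mod (b j) m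
            simp only [Pi.add_apply, Pi.smul_apply, smul_eq_mul]
            omega
          simp only [wordAt, h3] at h2
          exact h2
        · exact congrFun he2 ⟨c, Finset.mem_sdiff.2 ⟨hc, hct⟩⟩
    rw [Finset.card_product, Finset.card_univ, Fintype.card_fun, Fintype.card_coe, hcard,
      Fintype.card_fin] at hle
    calc ((T s).card : ℝ) ≤ D.card * (A : ℝ) ^ (k ^ d - (m * q) ^ d) := by exact_mod_cast hle
      _ ≤ _ := by
        gcongr
        exact card_prod_ge_le h0 h1 hθ
  rw [hunion, Set.ncard_coe_finset]
  calc (((box d m).biUnion T).card : ℝ) ≤ ∑ s ∈ box d m, ((T s).card : ℝ) := by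
        exact_mod_cast Finset.card_biUnion_le
    _ ≤ ∑ s ∈ box d m, θ⁻¹ * (A : ℝ) ^ (k ^ d - (m * q) ^ d) := Finset.sum_le_sum hTcard
    _ = _ := by simp [card_box]

/-- A configuration whose `m`-words carry little total information over `Λ_k` shows a heavy word
on `Λ_k`. -/
lemma wordAt_mem_heavyWords (hA : 1 < A) {m : ℕ} (hm : 0 < m) {p : Word A d m → ℝ}
    (h1 : ∀ w, p w ≤ 1) {k q : ℕ} (hkq : m * q ≤ k) {y : Config A d}
    (hy : ∀ c, 0 < p (wordAt y m c)) {N : ℝ}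
    (hN : ∑ c ∈ box d k, -Real.logb A (p (wordAt y m c)) ≤ (m : ℝ) ^ d * N) :
    wordAt y k 0 ∈ heavyWords p k q ((A : ℝ) ^ (-N)) := by
  have hA1 : (1 : ℝ) < A := by exact_mod_cast hA
  set f : Site d → ℝ := fun c => -Real.logb A (p (wordAt y m c)) with hf
  have hf0 : ∀ c, 0 ≤ f c := fun c =>
    neg_nonneg.2 (Real.logb_nonpos hA1 (hy c).le (h1 _))
  have hsum : ∑ s ∈ box d m, ∑ r ∈ box d q, f (s + m • r) ≤ ∑ _s ∈ box d m, N := by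
    rw [Finset.sum_comm, sum_box_mul hm, Finset.sum_const, card_box, nsmul_eq_mul, Nat.cast_pow]
    exact (Finset.sum_le_sum_of_subset_of_nonneg (box_mono hkq) fun c _ _ => hf0 c).trans hN
  obtain ⟨s, hs, hle⟩ := Finset.exists_le_of_sum_le ⟨0, mem_box.2 fun _ => hm⟩ hsum
  refine ⟨s, hs, y, rfl, ?_⟩
  rw [← sum_fin_eq_sum_box] at hle
  calc (A : ℝ) ^ (-N) ≤ (A : ℝ) ^ ∑ r : Fin d → Fin q, -f (s + m • fun j => (r j : ℕ)) := by
        rw [Finset.sum_neg_distrib]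
        exact Real.rpow_le_rpow_of_exponent_le hA1.le (neg_le_neg hle)
    _ = ∏ r : Fin d → Fin q, (A : ℝ) ^ (-f (s + m • fun j => (r j : ℕ))) :=
        Real.rpow_sum_of_pos (zero_lt_one.trans hA1) _ _
    _ = _ := Finset.prod_congr rfl fun r _ => by
        simp only [hf, neg_neg]
        exact Real.rpow_logb (zero_lt_one.trans hA1) hA1.ne' (hy _)

lemma empProb_eq (x : Config A d) (k n : ℕ) (S : Set (Word A d k))
    [DecidablePred fun r : Site d => wordAt x k (k • r) ∈ S] :
    empProb x k n S =
      (((box d (n / k)).filter fun r => wordAt x k (k • r) ∈ S).card : ℝ) /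
        ((n / k : ℕ) : ℝ) ^ d := by
  classical
  rw [empProb, Set.ncard_eq_toFinset_card', Finset.card_filter,
    ← sum_fin_eq_sum_box (n / k) fun r => if wordAt x k (k • r) ∈ S then 1 else 0,
    ← Finset.card_filter]
  congr 2
  refine congrArg _ ?_
  ext r
  simp only [Set.mem_toFinset, Set.mem_ofPred_eq, Finset.mem_filter, Finset.mem_univ, true_and]
  rfl

/-- If blocks outside `S` carry a total `e`-weight above `ε k^d`, and the average of `e` over large
cubes is below `δ ε`, then the empirical mass of `S` eventually exceeds `1 - δ`. -/
lemma eventually_lt_empProb {x : Config A d} {k : ℕ} (hk : 0 < k) {S : Set (Word A d k)}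
    {e : Site d → ℝ} (he : ∀ c, 0 ≤ e c) {ε δ lam : ℝ} (hε : 0 < ε) (hlam : lam < δ * ε)
    (hbad : ∀ r : Site d, wordAt x k (k • r) ∉ S →
      ε * (k : ℝ) ^ d ≤ ∑ c ∈ box d k, e (c + k • r))
    (hev : ∀ᶠ n : ℕ in atTop, ∑ c ∈ box d n, e c ≤ lam * (n : ℝ) ^ d) :
    ∀ᶠ n : ℕ in atTop, 1 - δ < empProb x k n S := by
  classical
  have hT : Tendsto (fun n : ℕ => k * (n / k)) atTop atTop :=
    (Nat.tendsto_div_const_atTop hk.ne').const_mul_atTop' hk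
  filter_upwards [hT.eventually hev, eventually_ge_atTop k] with n hn hnk
  set N := n / k with hNdef
  have hN : 0 < N := Nat.div_pos hnk hk
  have hNd : (0 : ℝ) < (N : ℝ) ^ d := by positivity
  have hkd : (0 : ℝ) < (k : ℝ) ^ d := by positivity
  rw [empProb_eq, lt_div_iff₀ hNd]
  set G := (box d N).filter fun r => wordAt x k (k • r) ∈ S with hG
  set B := (box d N).filter fun r => ¬ wordAt x k (k • r) ∈ S with hB
  have hGB : (G.card : ℝ) + B.card = (N : ℝ) ^ d := by
    have := Finset.card_filter_add_card_filter_not (s := box d N)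
      (fun r => wordAt x k (k • r) ∈ S)
    rw [card_box] at this
    exact_mod_cast this
  have h1 : (B.card : ℝ) * (ε * (k : ℝ) ^ d) ≤ lam * ((k * N : ℕ) : ℝ) ^ d := by
    calc (B.card : ℝ) * (ε * (k : ℝ) ^ d) ≤ ∑ r ∈ B, ∑ c ∈ box d k, e (c + k • r) := by
          rw [← nsmul_eq_mul]
          exact Finset.card_nsmul_le_sum _ _ _ fun r hr => hbad r (Finset.mem_filter.1 hr).2
      _ ≤ ∑ r ∈ box d N, ∑ c ∈ box d k, e (c + k • r) :=
          Finset.sum_le_sum_of_subset_of_nonneg (Finset.filter_subset _ _) fun r _ _ =>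
            Finset.sum_nonneg fun c _ => he _
      _ = ∑ c ∈ box d (k * N), e c := sum_box_mul hk N e
      _ ≤ _ := hn
  rw [Nat.cast_mul, mul_pow] at h1
  have h2 : (B.card : ℝ) * ε ≤ lam * (N : ℝ) ^ d := by
    refine le_of_mul_le_mul_right ?_ hkd
    linarith
  have h3 : (B.card : ℝ) * ε < (δ * (N : ℝ) ^ d) * ε := by nlinarith
  have h4 := lt_of_mul_lt_mul_right h3 hε.le
  linarith

/-- A constant plus the boundary term `k^d - (k-R)^d` is `o(k^d)`. -/
lemma eventually_overhead_le (hd : 1 ≤ d) (L : ℝ) (R : ℕ) {ε : ℝ} (hε : 0 < ε) :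
    ∀ᶠ k : ℕ in atTop, L + ((k : ℝ) ^ d - ((k - R : ℕ) : ℝ) ^ d) ≤ ε * (k : ℝ) ^ d := by
  have h1 : Tendsto (fun k : ℕ => L / (k : ℝ) ^ d) atTop (𝓝 0) :=
    tendsto_const_nhds.div_atTop <|
      (tendsto_pow_atTop (by omega)).comp tendsto_natCast_atTop_atTop
  have h2 := h1.add (tendsto_boundary_div d R)
  rw [add_zero] at h2
  filter_upwards [h2.eventually_lt_const hε, eventually_gt_atTop 0] with k hk hk0
  have : (0 : ℝ) < (k : ℝ) ^ d := by positivity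
  rw [← add_div, div_lt_iff₀ this] at hk
  exact hk.le

lemma HasEntropyRate.nonneg (hA : 1 < A) {μ : Measure (Config A d)} [IsProbabilityMeasure μ]
    {h : ℝ} (hrate : HasEntropyRate μ h) : 0 ≤ h :=
  ge_of_tendsto' hrate fun n =>
    div_nonneg (entH_nonneg hA (wordDist_nonneg μ n) (wordDist_le_one μ n)) (by positivity)

lemma logb_ncard_heavyWords_le (hA : 1 < A) {m : ℕ} (hm : 0 < m) {p : Word A d m → ℝ}
    (h0 : ∀ w, 0 ≤ p w) (h1 : ∑ w, p w = 1) {k q R : ℕ} (hkq : m * q + m ≤ k)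
    (hR : k - R ≤ m * q) {N : ℝ} (hN : 0 ≤ N) :
    Real.logb A (Set.ncard (heavyWords p k q ((A : ℝ) ^ (-N)))) ≤
      N + (Real.logb A ((m : ℝ) ^ d) + ((k : ℝ) ^ d - ((k - R : ℕ) : ℝ) ^ d)) := by
  have hA1 : (1 : ℝ) < A := by exact_mod_cast hA
  have hA0 : (0 : ℝ) < A := zero_lt_one.trans hA1
  have hm1 : (1 : ℝ) ≤ (m : ℝ) ^ d := one_le_pow₀ (by exact_mod_cast hm)
  have hb : ((k ^ d - (m * q) ^ d : ℕ) : ℝ) ≤ (k : ℝ) ^ d - ((k - R : ℕ) : ℝ) ^ d := by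
    have h2 : (m * q) ^ d ≤ k ^ d := Nat.pow_le_pow_left (by omega) d
    have h3 : (k - R) ^ d ≤ (m * q) ^ d := Nat.pow_le_pow_left hR d
    rw [Nat.cast_sub h2]
    have h4 : (((k - R : ℕ) : ℝ)) ^ d ≤ (((m * q : ℕ)) : ℝ) ^ d := by exact_mod_cast h3
    push_cast at h4 ⊢
    linarith
  have hbase : Real.logb A ((m : ℝ) ^ d * (((A : ℝ) ^ (-N))⁻¹ * (A : ℝ) ^ (k ^ d - (m * q) ^ d))) =
      Real.logb A ((m : ℝ) ^ d) + (N + ((k ^ d - (m * q) ^ d : ℕ) : ℝ)) := by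
    rw [← Real.rpow_neg hA0.le, neg_neg, ← Real.rpow_natCast (A : ℝ), ← Real.rpow_add hA0,
      Real.logb_mul (by positivity) (by positivity), Real.logb_rpow hA0 hA1.ne']
  have hcard := ncard_heavyWords_le hA hm h0 h1 (Real.rpow_pos_of_pos hA0 (-N)) hkq
  rcases Nat.eq_zero_or_pos (Set.ncard (heavyWords p k q ((A : ℝ) ^ (-N)))) with hz | hpos
  · rw [hz, Nat.cast_zero, Real.logb_zero]
    have := Real.logb_nonneg hA1 hm1
    have : (0 : ℝ) ≤ ((k ^ d - (m * q) ^ d : ℕ) : ℝ) := Nat.cast_nonneg _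
    linarith
  · have := Real.logb_le_logb_of_le hA1 (by exact_mod_cast hpos) hcard
    rw [hbase] at this
    linarith

/-- For every ergodic `μ` with entropy rate `h` and `δ ∈ (0,1/2)`, for all
large enough `k` there is a set `𝒯_k` of `k`-words of log-cardinality at most `(h+δ)k^d`
which eventually carries empirical mass more than `1-δ`, almost surely. -/
theorem typical_sampling_sets_exist
    (A d : ℕ) (hA : 2 ≤ A) (hd : 1 ≤ d)
    (μ : Measure (Config A d)) [IsProbabilityMeasure μ] (hμ : ErgodicShift μ)
    (h : ℝ) (hrate : HasEntropyRate μ h)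
    (δ : ℝ) (hδ0 : 0 < δ) (hδ1 : δ < 1 / 2) :
    ∃ k0 : ℕ, ∀ k ≥ k0, ∃ T : Set (Word A d k),
      Real.logb A (Set.ncard T) / (k : ℝ) ^ d ≤ h + δ ∧
      ∀ᵐ x ∂μ, ∃ n0 : ℕ, ∀ n ≥ n0, 1 - δ < empProb x k n T := by
  have hA1 : 1 < A := hA
  have hh := hrate.nonneg hA1
  set ε := δ / 4 with hε
  have hε0 : 0 < ε := by positivity
  obtain ⟨m, hmlt, hm⟩ :=
    ((hrate.eventually_lt_const (lt_add_of_pos_right h hε0)).and (eventually_gt_atTop 0)).exists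
  have hmd : (1 : ℝ) ≤ (m : ℝ) ^ d := one_le_pow₀ (by exact_mod_cast hm)
  rw [div_lt_iff₀ (by linarith)] at hmlt
  set p := wordDist μ m with hp
  set f : Config A d → ℝ := fun x => -Real.logb A (p (wordAt x m 0)) with hf
  have hfm : Measurable f :=
    (measurable_of_finite fun w => -Real.logb A (p w)).comp (measurable_wordAt m 0)
  obtain ⟨C, hC⟩ : ∃ C, ∀ x, |f x| ≤ C := by
    obtain ⟨C, hC⟩ := (Set.finite_range fun w : Word A d m => |-Real.logb A (p w)|).bddAbove
    exact ⟨C, fun x => hC ⟨_, rfl⟩⟩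
  have hfint : ∫ x, f x ∂μ = entH A p := by
    rw [hf, integral_comp_wordAt μ m fun w => -Real.logb A (p w), entH, ← Finset.sum_neg_distrib]
    exact Finset.sum_congr rfl fun w _ => mul_neg _ _
  set κ := δ * ε / (4 * 8 ^ d) with hκ
  have hκ0 : 0 < κ := by positivity
  obtain ⟨v, hv, hve⟩ := hμ.exists_uniformlyNull_approx hfm hC hκ0
  obtain ⟨hvm, ⟨D, hD⟩, β, hβ, hvβ⟩ := hv
  set a := ∫ y, f y ∂μ with ha
  set e : Config A d → ℝ := fun x => |f x - a - v x| with he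
  have hem : Measurable e := ((hfm.sub_const a).sub hvm).abs
  have heC : ∀ x, |e x| ≤ C + |a| + D := fun x => by
    rw [he, abs_abs]
    exact (abs_sub _ _).trans (add_le_add ((abs_sub _ _).trans (add_le_add (hC x) le_rfl)) (hD x))
  have h8 : 8 ^ d * κ = δ * ε / 4 := by
    rw [hκ]
    field_simp
  have hδε : 0 < δ * ε := by positivity
  have hmean : 8 ^ d * ∫ x, e x ∂μ < δ * ε / 2 := by
    have : 8 ^ d * ∫ x, e x ∂μ ≤ 8 ^ d * κ := by gcongr
    linarith
  have hae := hμ.eventually_sum_box_le hem (fun x => abs_nonneg _) heC hmean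
  obtain ⟨k0, hk0⟩ := eventually_atTop.1 ((hβ.eventually_lt_const hε0).and
    ((eventually_overhead_le hd (Real.logb A ((m : ℝ) ^ d)) (2 * m) hε0).and
      (eventually_ge_atTop (2 * m))))
  refine ⟨k0, fun k hk => ?_⟩
  obtain ⟨hβk, hover, hkm⟩ := hk0 k hk
  have hkpos : 0 < k := by omega
  have hkd : (0 : ℝ) < (k : ℝ) ^ d := by positivity
  set q := k / m - 1 with hq
  have hdm := Nat.div_add_mod k m
  have hml := Nat.mod_lt k hm
  have h2 : 1 ≤ k / m := (Nat.le_div_iff_mul_le hm).2 (by omega)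
  have hmq : m * q + m = m * (k / m) := by
    rw [hq, ← Nat.mul_succ]
    congr 1
    omega
  set N := (k : ℝ) ^ d * (h + 3 * ε) with hN
  refine ⟨heavyWords p k q ((A : ℝ) ^ (-N)), ?_, ?_⟩
  · rw [div_le_iff₀ hkd]
    have := logb_ncard_heavyWords_le hA1 hm (wordDist_nonneg μ m) (sum_wordDist μ m)
      (k := k) (q := q) (R := 2 * m) (by omega) (by omega) (N := N) (by positivity)
    have h4 : δ = 4 * ε := by rw [hε]; ring
    rw [h4]
    linarith
  · filter_upwards [hae, hμ.1.ae_wordDist_pos m] with x hx hpos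
    refine eventually_atTop.1 (eventually_lt_empProb hkpos (e := fun c => e (shift c x))
      (fun c => abs_nonneg _) hε0 (lam := 3 / 4 * (δ * ε)) (by linarith) (fun r hr => ?_)
      (hx _ (by linarith)))
    contrapose! hr
    have hy := wordAt_mem_heavyWords hA1 hm (wordDist_le_one μ m) (k := k) (q := q) (by omega)
      (y := shift (k • r) x) (fun c => by rw [wordAt_shift]; exact hpos _) (N := N) ?_
    · rwa [wordAt_shift, zero_add] at hy
    · have hfle : ∀ c : Site d, -Real.logb A (p (wordAt (shift (k • r) x) m c)) ≤
          a + v (shift c (shift (k • r) x)) + e (shift (c + k • r) x) := by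
        intro c
        have : -Real.logb A (p (wordAt (shift (k • r) x) m c)) = f (shift (c + k • r) x) := by
          simp only [hf, wordAt_shift, zero_add]
        rw [this, shift_shift]
        have := le_abs_self (f (shift (c + k • r) x) - a - v (shift (c + k • r) x))
        simp only [he]
        linarith
      refine (Finset.sum_le_sum fun c _ => hfle c).trans ?_
      rw [Finset.sum_add_distrib, Finset.sum_add_distrib, Finset.sum_const, card_box, nsmul_eq_mul,
        Nat.cast_pow]
      have h5 := (abs_le.1 (hvβ k hkpos (shift (k • r) x))).2
      have h6 : β k * (k : ℝ) ^ d ≤ ε * (k : ℝ) ^ d := by gcongr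
      have h7 : (k : ℝ) ^ d * a ≤ (k : ℝ) ^ d * ((h + ε) * (m : ℝ) ^ d) := by
        rw [hfint]
        gcongr
      have h8 : ε * (k : ℝ) ^ d ≤ (m : ℝ) ^ d * (ε * (k : ℝ) ^ d) :=
        le_mul_of_one_le_left (by positivity) hmd
      rw [hN]
      linarith

end SRU1408
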